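/- Assume that M is a projective R-module, that M/Σ_I is a projective R-module for every subset I ⊆ {1,…,n}, and that the collection M_1,…,M_n is distributive. Then for every subset I ⊆ {1,…,n} the R-module L^I := Π_{{1,…,n}∖I} / (Π_{{1,…,n}∖I} ∩ Σ_I) is projective. -/

import Mathlib

/-!
STATEMENT 5: if `M` and all quotients `M/Σ_I` are projective `R`-modules and the collection
`M_1, …, M_n` is distributive, then for every `I ⊆ {1,…,n}` the `R`-module
`L^I = Π_{{1,…,n}∖I} / (Π_{{1,…,n}∖I} ∩ Σ_I)` is projective.
-/

variable {R M : Type*} [CommRing R] [AddCommGroup M] [Module R M]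

/-- `Σ_I = ∑_{i ∈ I} M_i` (with `Σ_∅ = 0`). -/
abbrev sigmaSub {n : ℕ} (Mf : Fin n → Submodule R M) (I : Finset (Fin n)) : Submodule R M :=
  I.sup Mf

/-- `Π_I = ⋂_{i ∈ I} M_i` (with `Π_∅ = M`). -/
abbrev piSub {n : ℕ} (Mf : Fin n → Submodule R M) (I : Finset (Fin n)) : Submodule R M :=
  I.inf Mf

/-- The collection `M_1, …, M_n` is distributive if the sublattice of the lattice of
`R`-submodules of `M` generated by `{M_1, …, M_n}` under `+` (= `⊔`) and `∩` (= `⊓`)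
is a distributive lattice. -/
def IsDistributiveFamily {n : ℕ} (Mf : Fin n → Submodule R M) : Prop :=
  ∀ a ∈ latticeClosure (Set.range Mf), ∀ b ∈ latticeClosure (Set.range Mf),
    ∀ c ∈ latticeClosure (Set.range Mf), a ⊓ (b ⊔ c) = (a ⊓ b) ⊔ (a ⊓ c)

/-- `L^I = Π_{{1,…,n}∖I} / (Π_{{1,…,n}∖I} ∩ Σ_I)`. -/
abbrev subquotL {n : ℕ} (Mf : Fin n → Submodule R M) (I : Finset (Fin n)) : Type _ :=
  ↥(piSub Mf Iᶜ) ⧸ Submodule.comap (piSub Mf Iᶜ).subtype (sigmaSub Mf I)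

/-- The kernel of a surjection between projective modules is projective. -/
theorem Module.Projective.of_exact {R K P Q : Type*} [Ring R] [AddCommGroup K] [Module R K]
    [AddCommGroup P] [Module R P] [AddCommGroup Q] [Module R Q]
    [Module.Projective R P] [Module.Projective R Q] {f : K →ₗ[R] P} {g : P →ₗ[R] Q}
    (hfg : Function.Exact f g) (hf : Function.Injective f) (hg : Function.Surjective g) :
    Module.Projective R K := by
  have hsplit : ∃ l, g ∘ₗ l = LinearMap.id :=
    Module.projective_lifting_property g LinearMap.id hg
  have hretract : Function.Surjective g ∧ ∃ l, l ∘ₗ f = LinearMap.id :=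
    (hfg.split_tfae'.out 0 1).1 (And.intro hf hsplit)
  obtain ⟨-, l, hl⟩ := hretract
  exact Module.Projective.of_split f l hl

/-- If `M/A`, `M/B` and `M/(A + B)` are projective, then so is `M/(A ∩ B)`. -/
theorem Submodule.projective_quotient_inf {R M : Type*} [Ring R] [AddCommGroup M] [Module R M]
    {A B : Submodule R M} (hA : Module.Projective R (M ⧸ A)) (hB : Module.Projective R (M ⧸ B))
    (hAB : Module.Projective R (M ⧸ (A ⊔ B))) : Module.Projective R (M ⧸ (A ⊓ B)) := by
  refine Module.Projective.of_exact
    (f := (Submodule.factor (inf_le_left : A ⊓ B ≤ A)).prod (Submodule.factor inf_le_right))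
    (g := (Submodule.factor (le_sup_left : A ≤ A ⊔ B)).coprod
      (-Submodule.factor (le_sup_right : B ≤ A ⊔ B))) ?_ ?_ ?_
  · rintro ⟨x, y⟩
    obtain ⟨x, rfl⟩ := Submodule.mkQ_surjective _ x
    obtain ⟨y, rfl⟩ := Submodule.mkQ_surjective _ y
    constructor
    · intro h
      have h' : x - y ∈ A ⊔ B := by
        rw [← Submodule.Quotient.mk_eq_zero]
        simpa [← sub_eq_add_neg] using h
      obtain ⟨a, ha, b, hb, hab⟩ := Submodule.mem_sup.1 h'
      refine ⟨Submodule.Quotient.mk (x - a), Prod.ext ?_ ?_⟩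
      · exact (Submodule.Quotient.eq A).2 (by simpa using ha)
      · refine (Submodule.Quotient.eq B).2 ?_
        have hb' : x - a - y = b := by rw [sub_right_comm, ← hab, add_sub_cancel_left]
        exact hb'.symm ▸ hb
    · rintro ⟨z, hz⟩
      obtain ⟨z, rfl⟩ := Submodule.mkQ_surjective _ z
      rw [← hz]
      simp
  · rw [injective_iff_map_eq_zero]
    intro z hz
    obtain ⟨z, rfl⟩ := Submodule.mkQ_surjective _ z
    simpa using hz
  · intro z
    obtain ⟨z, rfl⟩ := Submodule.mkQ_surjective _ z
    exact ⟨(Submodule.Quotient.mk z, 0), by simp⟩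

/-- If `M/B` and `M/(A + B)` are projective, then so is `A/(A ∩ B)`. -/
theorem Submodule.projective_quotient_comap_subtype {R M : Type*} [Ring R] [AddCommGroup M]
    [Module R M] {A B : Submodule R M} (hB : Module.Projective R (M ⧸ B))
    (hAB : Module.Projective R (M ⧸ (A ⊔ B))) :
    Module.Projective R (A ⧸ B.comap A.subtype) := by
  refine Module.Projective.of_exact (f := Submodule.mapQ _ B A.subtype le_rfl)
    (g := Submodule.factor (le_sup_right : B ≤ A ⊔ B)) ?_ ?_ (Submodule.factor_surjective _)
  · intro x
    obtain ⟨x, rfl⟩ := Submodule.mkQ_surjective _ x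
    constructor
    · intro h
      have h' : x ∈ A ⊔ B := by simpa using h
      obtain ⟨a, ha, b, hb, rfl⟩ := Submodule.mem_sup.1 h'
      exact ⟨Submodule.Quotient.mk ⟨a, ha⟩, (Submodule.Quotient.eq B).2 (by simpa using hb)⟩
    · rintro ⟨z, hz⟩
      obtain ⟨z, rfl⟩ := Submodule.mkQ_surjective _ z
      rw [← hz]
      simpa using Submodule.mem_sup_left z.2
  · rw [injective_iff_map_eq_zero]
    intro z hz
    obtain ⟨z, rfl⟩ := Submodule.mkQ_surjective _ z
    simpa using hz

theorem piSub_eq_top_or_mem_latticeClosure {n : ℕ} (Mf : Fin n → Submodule R M)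
    (J : Finset (Fin n)) : piSub Mf J = ⊤ ∨ piSub Mf J ∈ latticeClosure (Set.range Mf) := by
  rcases J.eq_empty_or_nonempty with rfl | hJ
  · exact Or.inl Finset.inf_empty
  · rw [piSub, ← Finset.inf'_eq_inf hJ]
    exact Or.inr (isSublattice_latticeClosure.infClosed.finsetInf'_mem hJ
      fun i _ => subset_latticeClosure ⟨i, rfl⟩)

theorem sigmaSub_eq_bot_or_mem_latticeClosure {n : ℕ} (Mf : Fin n → Submodule R M)
    (K : Finset (Fin n)) : sigmaSub Mf K = ⊥ ∨ sigmaSub Mf K ∈ latticeClosure (Set.range Mf) := by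
  rcases K.eq_empty_or_nonempty with rfl | hK
  · exact Or.inl Finset.sup_empty
  · rw [sigmaSub, ← Finset.sup'_eq_sup hK]
    exact Or.inr (isSublattice_latticeClosure.supClosed.finsetSup'_mem hK
      fun i _ => subset_latticeClosure ⟨i, rfl⟩)

theorem IsDistributiveFamily.piSub_insert_sup_sigmaSub {n : ℕ} {Mf : Fin n → Submodule R M}
    (hdist : IsDistributiveFamily Mf) (j : Fin n) (J K : Finset (Fin n)) :
    piSub Mf (insert j J) ⊔ sigmaSub Mf K =
      (Mf j ⊔ sigmaSub Mf K) ⊓ (piSub Mf J ⊔ sigmaSub Mf K) := by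
  have hj : Mf j ∈ latticeClosure (Set.range Mf) := subset_latticeClosure ⟨j, rfl⟩
  rw [piSub, Finset.inf_insert]
  rcases sigmaSub_eq_bot_or_mem_latticeClosure Mf K with hK | hK
  · simp only [hK, sup_bot_eq]
  rcases piSub_eq_top_or_mem_latticeClosure Mf J with hJ | hJ
  · simp only [hJ, top_sup_eq, inf_top_eq]
  rw [hdist _ (isSublattice_latticeClosure.supClosed hj hK) _ hJ _ hK,
    inf_eq_right.2 (le_sup_right : sigmaSub Mf K ≤ Mf j ⊔ sigmaSub Mf K),
    inf_comm (Mf j ⊔ _), hdist _ hJ _ hj _ hK, sup_assoc,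
    sup_eq_right.2 (inf_le_right : piSub Mf J ⊓ sigmaSub Mf K ≤ _), inf_comm]

/-- For a distributive family all of whose quotients `M/Σ_K` are projective, the quotients
`M/(Π_J + Σ_K)` are projective too. -/
theorem IsDistributiveFamily.projective_quotient_piSub_sup_sigmaSub {n : ℕ}
    {Mf : Fin n → Submodule R M} (hdist : IsDistributiveFamily Mf)
    (hQ : ∀ K : Finset (Fin n), Module.Projective R (M ⧸ sigmaSub Mf K))
    (J K : Finset (Fin n)) : Module.Projective R (M ⧸ (piSub Mf J ⊔ sigmaSub Mf K)) := by
  induction J using Finset.induction_on generalizing K with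
  | empty =>
    have : Subsingleton (M ⧸ (piSub Mf ∅ ⊔ sigmaSub Mf K)) := by
      simp [Submodule.Quotient.subsingleton_iff]
    infer_instance
  | insert j J _ ih =>
    have hins : sigmaSub Mf (insert j K) = Mf j ⊔ sigmaSub Mf K := Finset.sup_insert
    rw [hdist.piSub_insert_sup_sigmaSub]
    refine Submodule.projective_quotient_inf (hins ▸ hQ (insert j K)) (ih K) ?_
    rw [sup_comm, sup_assoc, sup_left_comm (sigmaSub Mf K), sup_idem, ← hins]
    exact ih (insert j K)

theorem statement5 {n : ℕ} (hn : 1 ≤ n) (Mf : Fin n → Submodule R M)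
    (hM : Module.Projective R M)
    (hQ : ∀ I : Finset (Fin n), Module.Projective R (M ⧸ sigmaSub Mf I))
    (hdist : IsDistributiveFamily Mf) :
    ∀ I : Finset (Fin n), Module.Projective R (subquotL Mf I) := by
  exact fun I => Submodule.projective_quotient_comap_subtype (hQ I)
    (hdist.projective_quotient_piSub_sup_sigmaSub hQ Iᶜ I)
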